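/- Every maximal outerplanar graph (the graph of a triangulated simple polygon: the polygon's cycle on n ≥ 3 vertices plus a maximal set of non-crossing diagonals) is properly 3-colorable. -/

import Mathlib

open scoped Classical

noncomputable section

/-- A simple polygon with `n` vertices: a closed polygonal region in the plane bounded by a
non-self-intersecting closed polygonal chain on the vertices. -/
structure SimplePolygon (n : ℕ) [NeZero n] where
  vertex : Fin n → ℝ × ℝ
  inj : Function.Injective vertex
  region : Set (ℝ × ℝ)
  compact : IsCompact region
  vertex_mem : ∀ i, vertex i ∈ region
  nondeg : 3 ≤ n
  /-- the boundary chain is non-self-intersecting: non-adjacent edges are disjoint -/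
  edges_noncross : ∀ i j : Fin n, i ≠ j → i + 1 ≠ j → j + 1 ≠ i →
    segment ℝ (vertex i) (vertex (i + 1)) ∩ segment ℝ (vertex j) (vertex (j + 1)) = ∅
  /-- the polygon sides form the boundary of the region -/
  edges_boundary : ∀ i : Fin n, segment ℝ (vertex i) (vertex (i + 1)) ⊆ frontier region
  frontier_sub : frontier region ⊆ ⋃ i : Fin n, segment ℝ (vertex i) (vertex (i + 1))

variable {n : ℕ} [NeZero n]

/-- The closed triangle spanned by three polygon vertices. -/
def SimplePolygon.tri (P : SimplePolygon n) (t : Fin n × Fin n × Fin n) : Set (ℝ × ℝ) :=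
  convexHull ℝ {P.vertex t.1, P.vertex t.2.1, P.vertex t.2.2}

/-- The set of (indices of) vertices of a triangle. -/
def triVerts (t : Fin n × Fin n × Fin n) : Set (Fin n) := {t.1, t.2.1, t.2.2}

/-- A diagonal: a segment between two polygon vertices whose interior lies strictly inside
the polygon. -/
def SimplePolygon.IsDiagonal (P : SimplePolygon n) (i j : Fin n) : Prop :=
  i ≠ j ∧ openSegment ℝ (P.vertex i) (P.vertex j) ⊆ interior P.region

/-- A valid side of a triangle in a triangulation: either a polygon side or a diagonal. -/
def SimplePolygon.sideOk (P : SimplePolygon n) (i j : Fin n) : Prop :=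
  j = i + 1 ∨ i = j + 1 ∨ P.IsDiagonal i j

/-- A triangulation of a simple polygon: a decomposition of the region into triangles with
pairwise disjoint interiors, whose vertices are polygon vertices and whose sides are polygon
sides or pairwise non-crossing diagonals (a maximal such family: every piece is a triangle). -/
structure Triangulation (P : SimplePolygon n) where
  tris : Finset (Fin n × Fin n × Fin n)
  distinct : ∀ t ∈ tris, t.1 ≠ t.2.1 ∧ t.2.1 ≠ t.2.2 ∧ t.1 ≠ t.2.2
  covers : ⋃ t ∈ tris, P.tri t = P.region
  int_disjoint : ∀ t ∈ tris, ∀ s ∈ tris, t ≠ s →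
    interior (P.tri t) ∩ interior (P.tri s) = ∅
  sides : ∀ t ∈ tris, P.sideOk t.1 t.2.1 ∧ P.sideOk t.2.1 t.2.2 ∧ P.sideOk t.1 t.2.2

/-- The graph of a triangulated simple polygon: the polygon's cycle plus the triangulation
diagonals (equivalently, edges between any two vertices of a common triangle). -/
def polyGraph {P : SimplePolygon n} (T : Triangulation P) : SimpleGraph (Fin n) :=
  SimpleGraph.fromRel (fun i j =>
    j = i + 1 ∨ ∃ t ∈ T.tris, i ∈ triVerts t ∧ j ∈ triVerts t)

/-!
A graph on a cyclically ordered vertex set without crossing edges is 3-colorable: for any two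
distinct colors of `i` and `j`, the interval from `i` to `j` is colored by splitting it at the last
neighbour of `i` before `j`. So it suffices that no two triangles have sides that cross in the
cyclic order.

Suppose that `v a v b` is a side of a triangle and that another triangle has a vertex on each of the
two boundary arcs from `v a` to `v b`. Consider the two closed polygons formed by the diagonal and
one of the arcs. The product of the parities of their winding numbers is the parity for the whole
boundary, which is constant on the interior of the region. The first parity is constant on each open
triangle and along the second arc, and the second is constant along the first arc. An open triangle
has a vertex on one of the arcs, which determines one of its two parities. The second triangle
determines both, hence their product, so the first parity is the same on all open triangles. But it
changes across the diagonal.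

The parity of the winding number around `x` is the product over the edges of the principal square
roots of the rotations from one endpoint direction to the next, as seen from `x`. Each factor jumps
exactly across its edge.
-/

lemma isClosed_segment {E : Type*} [AddCommGroup E] [Module ℝ E] [TopologicalSpace E]
    [IsTopologicalAddGroup E] [ContinuousSMul ℝ E] [T2Space E] (x y : E) :
    IsClosed (segment ℝ x y) := by
  rw [← convexHull_pair]
  exact (Set.toFinite {x, y}).isClosed_convexHull ℝ

section UnitSqrt

open Complex

/-- The principal square root of the direction `w / ‖w‖` of a complex number `w ≠ 0`. It is
continuous off the negative real axis and changes sign across it. -/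
def unitSqrt (w : ℂ) : ℂ := exp (arg w / 2 * I)

lemma unitSqrt_sq {w : ℂ} (hw : w ≠ 0) : unitSqrt w ^ 2 = w / ‖w‖ := by
  rw [unitSqrt, ← exp_nat_mul, eq_div_iff (by simpa using hw), mul_comm]
  convert norm_mul_exp_arg_mul_I w using 3
  push_cast
  ring

lemma unitSqrt_ne_zero (w : ℂ) : unitSqrt w ≠ 0 := exp_ne_zero _

lemma continuousAt_unitSqrt {w : ℂ} (hw : w ∈ slitPlane) : ContinuousAt unitSqrt w := by
  have := continuousAt_arg hw
  unfold unitSqrt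
  fun_prop

lemma unitSqrt_inv_mul_self {w : ℂ} (hw : w ∈ slitPlane) : unitSqrt w⁻¹ * unitSqrt w = 1 := by
  rw [unitSqrt, unitSqrt, ← exp_add, arg_inv, if_neg (slitPlane_arg_ne_pi hw)]
  simp [neg_div]

lemma unitSqrt_of_im_pos {w : ℂ} (hw : 0 < w.im) : unitSqrt w = I * unitSqrt (-w) := by
  conv_rhs => rw [← exp_pi_div_two_mul_I]
  rw [unitSqrt, unitSqrt, ← exp_add, arg_neg_eq_arg_sub_pi_of_im_pos hw]
  push_cast
  ring_nf

lemma unitSqrt_of_im_neg {w : ℂ} (hw : w.im < 0) : unitSqrt w = -(I * unitSqrt (-w)) := by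
  rw [unitSqrt_of_im_pos (w := -w) (by simpa using hw), neg_neg, ← mul_assoc, I_mul_I]
  ring

end UnitSqrt

section Side

open Complex ComplexConjugate

/-- The cross product of `q - p` and `x - p`, positive exactly when `x` lies to the left of the
directed line from `p` to `q`. -/
def side (p q x : ℂ) : ℝ := (conj (q - p) * (x - p)).im

lemma side_swap (p q x : ℂ) : side q p x = -side p q x := by
  simp only [side, map_sub, mul_im, sub_re, sub_im, conj_re, conj_im]
  ring

lemma continuous_side (p q : ℂ) : Continuous (side p q) := by
  unfold side
  fun_prop

lemma side_add_smul (p q x y : ℂ) (t : ℝ) :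
    side p q (x + t • y) = side p q x + t * (conj (q - p) * y).im := by
  simp only [side, real_smul, map_sub, mul_im, mul_re, add_re, add_im, sub_re, sub_im, conj_re,
    conj_im, ofReal_re, ofReal_im]
  ring

lemma side_eq_zero_of_mem_segment {p q z : ℂ} (hz : z ∈ segment ℝ p q) : side p q z = 0 := by
  rw [segment_eq_image'] at hz
  obtain ⟨t, -, rfl⟩ := hz
  rw [side_add_smul, ← normSq_eq_conj_mul_self]
  simp [side]

lemma isLinearMap_mul_im (w : ℂ) : IsLinearMap ℝ fun x : ℂ => (w * x).im :=
  ⟨fun x y => by simp [mul_add], fun t x => by simp [mul_left_comm, mul_add]⟩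

lemma convex_side_pos (p q : ℂ) : Convex ℝ {x | 0 < side p q x} := by
  simpa only [side, mul_sub, sub_im, sub_pos] using
    convex_halfSpace_gt (isLinearMap_mul_im (conj (q - p))) _

lemma convex_side_nonneg (p q : ℂ) : Convex ℝ {x | 0 ≤ side p q x} := by
  simpa only [side, mul_sub, sub_im, sub_nonneg] using
    convex_halfSpace_ge (isLinearMap_mul_im (conj (q - p))) _

lemma mem_closure_side_pos {p q z : ℂ} (hpq : p ≠ q) (hz : z ∈ segment ℝ p q) :
    z ∈ closure {x | 0 < side p q x} := by
  have hlim : Filter.Tendsto (fun t : ℝ => z + t • (I * (q - p))) (nhdsWithin 0 (Set.Ioi 0))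
      (nhds z) := by
    have hcont : Continuous fun t : ℝ => z + t • (I * (q - p)) := by fun_prop
    simpa using (hcont.tendsto 0).mono_left nhdsWithin_le_nhds
  refine mem_closure_of_tendsto hlim ?_
  filter_upwards [self_mem_nhdsWithin] with t ht
  have hcross : (conj (q - p) * (I * (q - p))).im = normSq (q - p) := by
    rw [mul_left_comm, ← normSq_eq_conj_mul_self]
    simp
  rw [side_add_smul, side_eq_zero_of_mem_segment hz, zero_add, hcross]
  exact mul_pos ht (normSq_pos.mpr (sub_ne_zero.mpr hpq.symm))

lemma notMem_interior_convexHull_of_mem_segment {p q z : ℂ} (hpq : p ≠ q) (r : ℂ)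
    (hz : z ∈ segment ℝ p q) : z ∉ interior (convexHull ℝ {p, q, r}) := by
  wlog hr : 0 ≤ side p q r generalizing p q
  · rw [Set.insert_comm]
    refine this hpq.symm (segment_symm ℝ p q ▸ hz) ?_
    rw [side_swap]
    linarith
  intro hzi
  have hhull : convexHull ℝ {p, q, r} ⊆ {x | 0 ≤ side p q x} := by
    refine convexHull_min ?_ (convex_side_nonneg p q)
    rintro x (rfl | rfl | rfl)
    · exact (side_eq_zero_of_mem_segment (left_mem_segment ℝ _ _)).ge
    · exact (side_eq_zero_of_mem_segment (right_mem_segment ℝ _ _)).ge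
    · exact hr
  obtain ⟨y, hyi, hy⟩ := mem_closure_iff.mp
    (mem_closure_side_pos hpq.symm (segment_symm ℝ p q ▸ hz)) _ isOpen_interior hzi
  have hy' : 0 ≤ side p q y := hhull (interior_subset hyi)
  rw [Set.mem_ofPred_eq, side_swap] at hy
  linarith

lemma im_div_sub (p q x : ℂ) : ((q - x) / (p - x)).im = side p q x / normSq (p - x) := by
  simp only [side, div_im, map_sub, mul_im, sub_re, sub_im, conj_re, conj_im]
  ring

lemma div_mem_slitPlane_of_notMem_segment {p q x : ℂ} (hx : x ∉ segment ℝ p q) :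
    (q - x) / (p - x) ∈ slitPlane := by
  contrapose! hx
  rcases eq_or_ne x p with rfl | hxp
  · exact left_mem_segment ℝ _ _
  obtain ⟨hre, him⟩ : ((q - x) / (p - x)).re ≤ 0 ∧ ((q - x) / (p - x)).im = 0 := by
    simpa [mem_slitPlane_iff] using hx
  have hray : q - x = (-((q - x) / (p - x)).re) • (x - p) := by
    have hreal : (((q - x) / (p - x)).re : ℂ) = (q - x) / (p - x) := by
      apply Complex.ext <;> simp [him]
    rw [real_smul, ofReal_neg, hreal]
    field_simp [sub_ne_zero.mpr hxp.symm]
    ring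
  rw [mem_segment_iff_sameRay, hray]
  exact SameRay.sameRay_nonneg_smul_right _ (by linarith)

lemma re_div_sub_neg_of_mem_openSegment {p q z : ℂ} (hpq : p ≠ q)
    (hz : z ∈ openSegment ℝ p q) : ((q - z) / (p - z)).re < 0 := by
  rw [openSegment_eq_image'] at hz
  obtain ⟨t, ⟨ht0, ht1⟩, rfl⟩ := hz
  have hne : q - p ≠ 0 := sub_ne_zero.mpr hpq.symm
  have hratio : (q - (p + t • (q - p))) / (p - (p + t • (q - p))) = ((-((1 - t) / t) : ℝ) : ℂ) := by
    have ht : (t : ℂ) ≠ 0 := by exact_mod_cast ht0.ne'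
    rw [real_smul, div_eq_iff (by simp [ht, hne])]
    push_cast
    field_simp
    ring
  rw [hratio, ofReal_re]
  exact neg_neg_of_pos (div_pos (by linarith) ht0)

end Side

section HalfTurn

open Complex Filter Topology

/-- The principal square root of the rotation taking the direction from `x` to `p` to the direction
from `x` to `q`. It is continuous in `x` off the segment from `p` to `q` and changes sign across
it. -/
def halfTurn (p q x : ℂ) : ℂ := unitSqrt ((q - x) / (p - x))

lemma halfTurn_self (p x : ℂ) : halfTurn p p x = 1 := by
  rcases eq_or_ne p x with rfl | h
  · simp [halfTurn, unitSqrt]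
  · simp [halfTurn, unitSqrt, div_self (sub_ne_zero.mpr h)]

lemma halfTurn_sq {p q x : ℂ} (hp : x ≠ p) (hq : x ≠ q) :
    halfTurn p q x ^ 2 = (q - x) / ‖q - x‖ / ((p - x) / ‖p - x‖) := by
  rw [halfTurn, unitSqrt_sq (div_ne_zero (sub_ne_zero.mpr hq.symm) (sub_ne_zero.mpr hp.symm)),
    norm_div, ofReal_div, div_div_div_comm]

lemma halfTurn_mul_halfTurn_swap {p q x : ℂ} (hx : x ∉ segment ℝ p q) :
    halfTurn p q x * halfTurn q p x = 1 := by
  rw [mul_comm, halfTurn, halfTurn, ← inv_div (q - x) (p - x)]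
  exact unitSqrt_inv_mul_self (div_mem_slitPlane_of_notMem_segment hx)

lemma continuousAt_halfTurn {p q x : ℂ} (hx : x ∉ segment ℝ p q) :
    ContinuousAt (halfTurn p q) x := by
  have hxp : p - x ≠ 0 := sub_ne_zero.mpr fun h => hx (h ▸ left_mem_segment ℝ _ _)
  have hdiv : ContinuousAt (fun y => (q - y) / (p - y)) x := by fun_prop (disch := exact hxp)
  exact ContinuousAt.comp (f := fun y => (q - y) / (p - y))
    (continuousAt_unitSqrt (div_mem_slitPlane_of_notMem_segment hx)) hdiv

lemma eventually_re_div_sub_neg {p q z : ℂ} (hpq : p ≠ q) (hz : z ∈ openSegment ℝ p q) :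
    ∀ᶠ x in 𝓝 z, ((q - x) / (p - x)).re < 0 := by
  have hneg := re_div_sub_neg_of_mem_openSegment hpq hz
  have hzp : p - z ≠ 0 := fun h => by simp [h] at hneg
  have hcont : ContinuousAt (fun x => ((q - x) / (p - x)).re) z := by
    fun_prop (disch := exact hzp)
  exact hcont.eventually_lt_const hneg

lemma eventually_mem_segment_of_side_eq_zero {p q z : ℂ} (hpq : p ≠ q)
    (hz : z ∈ openSegment ℝ p q) : ∀ᶠ x in 𝓝 z, side p q x = 0 → x ∈ segment ℝ p q := by
  filter_upwards [eventually_re_div_sub_neg hpq hz] with x hre hside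
  contrapose! hre
  have hslit := div_mem_slitPlane_of_notMem_segment hre
  rw [mem_slitPlane_iff, im_div_sub, hside, zero_div] at hslit
  exact (hslit.resolve_right (not_not_intro rfl)).le

lemma halfTurn_of_side_pos {p q x : ℂ} (hxp : x ≠ p) (hx : 0 < side p q x) :
    halfTurn p q x = I * unitSqrt (-((q - x) / (p - x))) := by
  refine unitSqrt_of_im_pos ?_
  rw [im_div_sub]
  exact div_pos hx (normSq_pos.mpr (sub_ne_zero.mpr hxp.symm))

lemma halfTurn_of_side_neg {p q x : ℂ} (hxp : x ≠ p) (hx : side p q x < 0) :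
    halfTurn p q x = -(I * unitSqrt (-((q - x) / (p - x)))) := by
  refine unitSqrt_of_im_neg ?_
  rw [im_div_sub]
  exact div_neg_of_neg_of_pos hx (normSq_pos.mpr (sub_ne_zero.mpr hxp.symm))

lemma exists_mul_halfTurn_eq_of_side {p q z : ℂ} {f : ℂ → ℂ} (hpq : p ≠ q)
    (hz : z ∈ openSegment ℝ p q) (hf : ∀ᶠ x in 𝓝 z, ContinuousAt f x)
    (hsq : ∀ᶠ x in 𝓝 z, (f x * halfTurn p q x) ^ 2 = 1) :
    ∃ c ≠ 0, ∀ᶠ x in 𝓝 z, (0 < side p q x → f x * halfTurn p q x = c) ∧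
      (side p q x < 0 → f x * halfTurn p q x = -c) := by
  -- Rotating the branch cut away from the edge makes `g` continuous across it.
  let g : ℂ → ℂ := fun x => f x * (I * unitSqrt (-((q - x) / (p - x))))
  obtain ⟨r, hr, hball⟩ := Metric.eventually_nhds_iff_ball.mp
    ((eventually_re_div_sub_neg hpq hz).and (hf.and hsq))
  have hne : ∀ x ∈ Metric.ball z r, p - x ≠ 0 := fun x hx h => by simpa [h] using (hball x hx).1
  have hcont : ContinuousOn g (Metric.ball z r) := fun x hx => by
    have hslit : -((q - x) / (p - x)) ∈ slitPlane := .inl (by simpa using (hball x hx).1)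
    have hdiv : ContinuousAt (fun y => -((q - y) / (p - y))) x := by
      fun_prop (disch := exact hne x hx)
    have hroot : ContinuousAt (fun y => unitSqrt (-((q - y) / (p - y)))) x :=
      ContinuousAt.comp (f := fun y => -((q - y) / (p - y))) (continuousAt_unitSqrt hslit) hdiv
    exact ((hball x hx).2.1.mul (continuousAt_const.mul hroot)).continuousWithinAt
  have hg_sq : Set.EqOn (g ^ 2) 1 (Metric.ball z r) := fun x hx => by
    have hw : (q - x) / (p - x) ≠ 0 := fun h => by simpa [h] using (hball x hx).1
    calc g x ^ 2 = (f x * halfTurn p q x) ^ 2 := by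
          rw [mul_pow, mul_pow, mul_pow, halfTurn, unitSqrt_sq (neg_ne_zero.mpr hw),
            unitSqrt_sq hw, norm_neg, I_sq]
          ring
      _ = 1 := (hball x hx).2.2
  have hconst : ∀ x ∈ Metric.ball z r, g x = g z := fun x hx => by
    rcases (convex_ball z r).isPreconnected.eq_one_or_eq_neg_one_of_sq_eq hcont hg_sq with h | h <;>
      rw [h hx, h (Metric.mem_ball_self hr)] <;> rfl
  refine ⟨g z, fun h => by simpa [h] using hg_sq (Metric.mem_ball_self hr), ?_⟩
  filter_upwards [Metric.ball_mem_nhds z hr] with x hx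
  have hxp : x ≠ p := (sub_ne_zero.mp (hne x hx)).symm
  rw [← hconst x hx]
  exact ⟨fun h => by rw [halfTurn_of_side_pos hxp h],
    fun h => by rw [halfTurn_of_side_neg hxp h, mul_neg]⟩

end HalfTurn

section WindingSign

open Filter Topology Finset

/-- The `k`-th edge of the polygonal chain with vertices `v`. -/
def edge (v : ℕ → ℂ) (k : ℕ) : Set ℂ := segment ℝ (v k) (v (k + 1))

/-- The closed polygonal chain `v a, v (a + 1), …, v b, v a`. -/
def loop (v : ℕ → ℂ) (a b : ℕ) : Set ℂ := (⋃ k ∈ Ico a b, edge v k) ∪ segment ℝ (v b) (v a)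

/-- The product of the half turns along `loop v a b`, as seen from `x`. Off the loop this is `1` or
`-1` according to the parity of the winding number around `x`. -/
def windingSign (v : ℕ → ℂ) (a b : ℕ) (x : ℂ) : ℂ :=
  (∏ k ∈ Ico a b, halfTurn (v k) (v (k + 1)) x) * halfTurn (v b) (v a) x

variable {v : ℕ → ℂ} {a b c : ℕ} {x y z : ℂ}

lemma notMem_loop_iff : x ∉ loop v a b ↔
    (∀ k ∈ Ico a b, x ∉ edge v k) ∧ x ∉ segment ℝ (v b) (v a) := by
  simp [loop]

lemma ne_vertex_of_notMem_loop (hx : x ∉ loop v a b) : ∀ k ∈ Icc a b, x ≠ v k := by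
  rw [notMem_loop_iff] at hx
  intro k hk
  rintro rfl
  rw [mem_Icc] at hk
  rcases hk.2.lt_or_eq with hkb | rfl
  · exact hx.1 k (mem_Ico.mpr ⟨hk.1, hkb⟩) (left_mem_segment ℝ _ _)
  · exact hx.2 (left_mem_segment ℝ _ _)

lemma prod_halfTurn_sq (hab : a ≤ b) (hx : ∀ k ∈ Icc a b, x ≠ v k) :
    (∏ k ∈ Ico a b, halfTurn (v k) (v (k + 1)) x) ^ 2 =
      (v b - x) / ‖v b - x‖ / ((v a - x) / ‖v a - x‖) := by
  induction b, hab using Nat.le_induction with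
  | base =>
    have hne : v a - x ≠ 0 := sub_ne_zero.mpr (hx a (by simp)).symm
    rw [Ico_self, prod_empty, one_pow, div_self (div_ne_zero hne (by simpa using hne))]
  | succ b hab ih =>
    have hxb : x ≠ v b := hx b (by simp; lia)
    have hne : v b - x ≠ 0 := sub_ne_zero.mpr hxb.symm
    rw [prod_Ico_succ_top hab, mul_pow, halfTurn_sq hxb (hx (b + 1) (by simp; lia)),
      ih fun k hk => hx k (by simp at hk ⊢; lia), mul_comm,
      div_mul_div_cancel₀ (div_ne_zero hne (by simpa using hne))]

lemma windingSign_sq (hab : a ≤ b) (hx : ∀ k ∈ Icc a b, x ≠ v k) :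
    windingSign v a b x ^ 2 = 1 := by
  have hne : ∀ k ∈ Icc a b, (v k - x) / ‖v k - x‖ ≠ 0 := fun k hk => by
    have := sub_ne_zero.mpr (hx k hk).symm
    exact div_ne_zero this (by simpa using this)
  have ha : a ∈ Icc a b := left_mem_Icc.mpr hab
  have hb : b ∈ Icc a b := right_mem_Icc.mpr hab
  rw [windingSign, mul_pow, prod_halfTurn_sq hab hx, halfTurn_sq (hx b hb) (hx a ha),
    div_mul_div_cancel₀ (hne a ha), div_self (hne b hb)]

lemma continuousAt_windingSign (hx : x ∉ loop v a b) : ContinuousAt (windingSign v a b) x := by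
  rw [notMem_loop_iff] at hx
  exact (tendsto_finsetProd _ fun k hk => continuousAt_halfTurn (hx.1 k hk)).mul
    (continuousAt_halfTurn hx.2)

lemma windingSign_eq_of_isPreconnected (hab : a ≤ b) {S : Set ℂ} (hS : IsPreconnected S)
    (hdisj : ∀ x ∈ S, x ∉ loop v a b) (hx : x ∈ S) (hy : y ∈ S) :
    windingSign v a b x = windingSign v a b y := by
  have hcont : ContinuousOn (windingSign v a b) S := fun z hz =>
    (continuousAt_windingSign (hdisj z hz)).continuousWithinAt
  have hsq : Set.EqOn (windingSign v a b ^ 2) 1 S := fun z hz =>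
    windingSign_sq hab (ne_vertex_of_notMem_loop (hdisj z hz))
  rcases hS.eq_one_or_eq_neg_one_of_sq_eq hcont hsq with h | h <;> rw [h hx, h hy] <;> rfl

lemma windingSign_mul_windingSign (hab : a ≤ b) (hbc : b ≤ c) (hca : v c = v a)
    (hx : x ∉ segment ℝ (v b) (v a)) :
    windingSign v a b x * windingSign v b c x = windingSign v a c x := by
  simp only [windingSign, hca, halfTurn_self, mul_one, ← prod_Ico_consecutive _ hab hbc]
  rw [mul_mul_mul_comm, halfTurn_mul_halfTurn_swap hx, mul_one]

lemma windingSign_ne_zero (v : ℕ → ℂ) (a b : ℕ) (x : ℂ) : windingSign v a b x ≠ 0 :=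
  mul_ne_zero (prod_ne_zero_iff.mpr fun _ _ => unitSqrt_ne_zero _) (unitSqrt_ne_zero _)

lemma exists_windingSign_eq_of_side (hab : a ≤ b) (hne : v b ≠ v a)
    (hz : z ∈ openSegment ℝ (v b) (v a)) (hedge : ∀ k ∈ Ico a b, z ∉ edge v k) :
    ∃ c ≠ 0, ∀ᶠ x in 𝓝 z, (0 < side (v b) (v a) x → windingSign v a b x = c) ∧
      (side (v b) (v a) x < 0 → windingSign v a b x = -c) := by
  have hedge' : ∀ᶠ x in 𝓝 z, ∀ k ∈ Ico a b, x ∉ edge v k :=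
    (eventually_all_finset _).mpr fun k hk =>
      (isClosed_segment _ _).isOpen_compl.mem_nhds (hedge k hk)
  have hvertex : ∀ᶠ x in 𝓝 z, ∀ k ∈ Icc a b, x ≠ v k := by
    refine (eventually_all_finset _).mpr fun k hk => isOpen_ne.mem_nhds ?_
    rintro rfl
    rcases (mem_Icc.mp hk).2.lt_or_eq with hkb | rfl
    · exact hedge k (mem_Ico.mpr ⟨(mem_Icc.mp hk).1, hkb⟩) (left_mem_segment ℝ _ _)
    · exact hne (left_mem_openSegment_iff.mp hz)
  exact exists_mul_halfTurn_eq_of_side hne hz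
    (hedge'.mono fun x hx => tendsto_finsetProd _ fun k hk => continuousAt_halfTurn (hx k hk))
    (hvertex.mono fun x hx => windingSign_sq hab hx)

lemma exists_windingSign_ne (hab : a ≤ b) (hne : v b ≠ v a)
    (hz : z ∈ openSegment ℝ (v b) (v a)) (hedge : ∀ k ∈ Ico a b, z ∉ edge v k) {D : Set ℂ}
    (hD : closure D ∈ 𝓝 z) : ∃ x ∈ D, ∃ y ∈ D, windingSign v a b x ≠ windingSign v a b y := by
  obtain ⟨c, hc, hflip⟩ := exists_windingSign_eq_of_side hab hne hz hedge
  obtain ⟨U, hU, hUo, hzU⟩ := mem_nhds_iff.mp (inter_mem hflip hD)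
  have hmeet : ∀ p q : ℂ, p ≠ q → z ∈ segment ℝ p q →
      ∃ x ∈ D, x ∈ U ∧ 0 < side p q x := fun p q hpq hzpq => by
    have hopen : IsOpen (U ∩ {x | 0 < side p q x}) :=
      hUo.inter (isOpen_lt continuous_const (continuous_side p q))
    obtain ⟨w, hwU, hw⟩ := mem_closure_iff.mp (mem_closure_side_pos hpq hzpq) U hUo hzU
    obtain ⟨x, hx, hxD⟩ := mem_closure_iff.mp (hU hwU).2 _ hopen ⟨hwU, hw⟩
    exact ⟨x, hxD, hx⟩
  have hzs := openSegment_subset_segment ℝ _ _ hz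
  obtain ⟨x, hxD, hxU, hx⟩ := hmeet _ _ hne hzs
  obtain ⟨y, hyD, hyU, hy⟩ := hmeet _ _ hne.symm (segment_symm ℝ (v b) (v a) ▸ hzs)
  rw [side_swap, neg_pos] at hy
  refine ⟨x, hxD, y, hyD, ?_⟩
  rw [(hU hxU).1.1 hx, (hU hyU).1.2 hy]
  exact self_ne_neg.mpr hc

end WindingSign

section RegularClosed

open Filter Topology

lemma eq_of_eventually_const {X Y : Type*} [TopologicalSpace X] {S D : Set X} {g : X → Y} {x y : X}
    (hS : IsPreconnected S) (hD : Dense D)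
    (hloc : ∀ z ∈ S, ∃ c, ∀ᶠ w in 𝓝 z, w ∈ D → g w = c) (hx : x ∈ S ∩ D) (hy : y ∈ S ∩ D) :
    g x = g y := by
  have huniq : ∀ z c d, (∀ᶠ w in 𝓝 z, w ∈ D → g w = c) → (∀ᶠ w in 𝓝 z, w ∈ D → g w = d) →
      c = d := fun z c d hc hd => by
    obtain ⟨w, hw, hwc, hwd⟩ := ((mem_closure_iff_frequently.mp (hD z)).and_eventually
      (hc.and hd)).exists
    rw [← hwc hw, hwd hw]
  obtain ⟨c, hcx, hcy⟩ := hS.induction₂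
    (fun z w => ∃ c, (∀ᶠ u in 𝓝 z, u ∈ D → g u = c) ∧ ∀ᶠ u in 𝓝 w, u ∈ D → g u = c)
    (fun z hz => by
      obtain ⟨c, hc⟩ := hloc z hz
      filter_upwards [mem_nhdsWithin_of_mem_nhds (eventually_eventually_nhds.mpr hc)] with w hw
      exact ⟨c, hc, hw⟩)
    (fun z w u _ _ _ ⟨c, hcz, hcw⟩ ⟨d, hdw, hdu⟩ =>
      ⟨c, hcz, huniq w c d hcw hdw ▸ hdu⟩)
    (fun z w _ _ ⟨c, hcz, hcw⟩ => ⟨c, hcw, hcz⟩) hx.1 hy.1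
  rw [hcx.self_of_nhds hx.2, hcy.self_of_nhds hy.2]

lemma subset_interior_or_subset_compl {X : Type*} [TopologicalSpace X] {S R : Set X}
    (hS : IsPreconnected S) (hR : IsClosed R) (hfr : Disjoint S (frontier R)) :
    S ⊆ interior R ∨ S ⊆ Rᶜ := by
  refine hS.subset_or_subset isOpen_interior hR.isOpen_compl
    (disjoint_compl_right.mono_left interior_subset) ?_
  rw [← hR.isOpen_compl.interior_eq, ← compl_frontier_eq_union_interior]
  exact hfr.subset_compl_right

lemma eventually_mem_iff_side {R : Set ℂ} {p q z : ℂ} (hR : IsClosed R)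
    (hreg : R ⊆ closure (interior R)) (hz : z ∈ frontier R)
    (hfr : ∀ᶠ x in 𝓝 z, x ∈ frontier R ↔ side p q x = 0) :
    (∀ᶠ x in 𝓝 z, x ∉ frontier R → (x ∈ R ↔ 0 < side p q x)) ∨
      ∀ᶠ x in 𝓝 z, x ∉ frontier R → (x ∈ R ↔ side p q x < 0) := by
  obtain ⟨r, hr, hball⟩ := Metric.eventually_nhds_iff_ball.mp hfr
  have hsides : ∀ p' q' : ℂ, (∀ x, 0 < side p' q' x → side p q x ≠ 0) →
      Metric.ball z r ∩ {x | 0 < side p' q' x} ⊆ interior R ∨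
        Metric.ball z r ∩ {x | 0 < side p' q' x} ⊆ Rᶜ := fun p' q' hne =>
    subset_interior_or_subset_compl ((convex_ball z r).inter (convex_side_pos p' q')).isPreconnected
      hR (Set.disjoint_left.mpr fun x hx hxfr => hne x hx.2 ((hball x hx.1).mp hxfr))
  have hneg : ∀ x, 0 < side q p x ↔ side p q x < 0 := fun x => by rw [side_swap, neg_pos]
  have hzR := hR.frontier_subset hz
  rcases hsides p q fun _ => ne_of_gt with hpos | hpos <;>
    rcases hsides q p fun x hx => ((hneg x).mp hx).ne with hneg' | hneg'
  · refine absurd ?_ hz.2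
    rw [mem_interior_iff_mem_nhds]
    filter_upwards [Metric.ball_mem_nhds z hr] with x hx
    rcases lt_trichotomy (side p q x) 0 with h | h | h
    · exact interior_subset (hneg' ⟨hx, (hneg x).mpr h⟩)
    · exact hR.frontier_subset ((hball x hx).mpr h)
    · exact interior_subset (hpos ⟨hx, h⟩)
  · left
    filter_upwards [Metric.ball_mem_nhds z hr] with x hx hxfr
    refine ⟨fun hxR => ?_, fun h => interior_subset (hpos ⟨hx, h⟩)⟩
    rw [(hball x hx)] at hxfr
    exact (lt_or_gt_of_ne hxfr).resolve_left fun h => hneg' ⟨hx, (hneg x).mpr h⟩ hxR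
  · right
    filter_upwards [Metric.ball_mem_nhds z hr] with x hx hxfr
    refine ⟨fun hxR => ?_, fun h => interior_subset (hneg' ⟨hx, (hneg x).mpr h⟩)⟩
    rw [(hball x hx)] at hxfr
    exact (lt_or_gt_of_ne hxfr).resolve_right fun h => hpos ⟨hx, h⟩ hxR
  · obtain ⟨x, hx, hxR⟩ := mem_closure_iff.mp (hreg hzR) _ Metric.isOpen_ball
      (Metric.mem_ball_self hr)
    rcases lt_trichotomy (side p q x) 0 with h | h | h
    · exact absurd (interior_subset hxR) (hneg' ⟨hx, (hneg x).mpr h⟩)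
    · exact absurd hxR ((hball x hx).mpr h).2
    · exact absurd (interior_subset hxR) (hpos ⟨hx, h⟩)

end RegularClosed

/-- `R` is a closed region of the plane bounded by a simple closed polygon with `N ≥ 4` sides. The
vertices are the values of an `N`-periodic sequence `v`, so that arcs of the boundary are intervals
of indices. -/
structure IsPolygonalRegion (N : ℕ) (v : ℕ → ℂ) (R : Set ℂ) : Prop where
  four_le : 4 ≤ N
  periodic : Function.Periodic v N
  vertex_ne : ∀ ⦃i j⦄, i < j → j < i + N → v i ≠ v j
  disjoint_edge : ∀ ⦃i j⦄, i + 1 < j → j + 1 < i + N → Disjoint (edge v i) (edge v j)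
  isClosed : IsClosed R
  frontier_eq : frontier R = ⋃ k, edge v k

/-- The winding sign of the boundary polygon, with its sign reversed outside `R`. Crossing a side
changes both factors, which makes this constant off the boundary. -/
def relativeWindingSign (N : ℕ) (v : ℕ → ℂ) (R : Set ℂ) (x : ℂ) : ℂ :=
  windingSign v 0 N x * if x ∈ R then 1 else -1

namespace IsPolygonalRegion

open Filter Topology Finset

variable {N : ℕ} {v : ℕ → ℂ} {R : Set ℂ} {a b i j k l : ℕ} {x y z : ℂ}

lemma edge_periodic (h : IsPolygonalRegion N v R) : Function.Periodic (edge v) N := fun k => by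
  rw [edge, edge, h.periodic, add_right_comm, h.periodic]

lemma edge_subset_frontier (h : IsPolygonalRegion N v R) (k : ℕ) : edge v k ⊆ frontier R :=
  h.frontier_eq ▸ Set.subset_iUnion _ k

lemma vertex_mem_frontier (h : IsPolygonalRegion N v R) (k : ℕ) : v k ∈ frontier R :=
  h.edge_subset_frontier k (left_mem_segment ℝ _ _)

lemma exists_mem_edge (h : IsPolygonalRegion N v R) (a : ℕ) (hx : x ∈ frontier R) :
    ∃ k ∈ Ico a (a + N), x ∈ edge v k := by
  rw [h.frontier_eq, Set.mem_iUnion] at hx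
  obtain ⟨k, hk⟩ := hx
  have hmod : k % N ∈ (Ico a (a + N)).image (· % N) := by
    rw [Nat.image_Ico_mod, mem_range]
    exact Nat.mod_lt _ (by have := h.four_le; lia)
  obtain ⟨l, hl, hlk⟩ := mem_image.mp hmod
  refine ⟨l, hl, ?_⟩
  rwa [← h.edge_periodic.map_mod_nat, hlk, h.edge_periodic.map_mod_nat]

lemma vertex_notMem_edge (h : IsPolygonalRegion N v R) (hij : i + 1 < j) (hj : j < i + N) :
    v j ∉ edge v i := by
  intro hmem
  rcases (Nat.succ_le_iff.mpr hj).lt_or_eq with hj' | hj'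
  · exact Set.disjoint_left.mp (h.disjoint_edge hij hj') hmem (left_mem_segment ℝ _ _)
  · obtain ⟨j, rfl⟩ : ∃ m, j = m + 1 := ⟨j - 1, by lia⟩
    have := h.four_le
    exact Set.disjoint_left.mp (h.disjoint_edge (by lia) (by lia)) hmem (right_mem_segment ℝ _ _)

lemma eq_vertex_of_mem_edge_of_mem_edge_succ (h : IsPolygonalRegion N v R) (hz : z ∈ edge v k)
    (hz' : z ∈ edge v (k + 1)) : z = v (k + 1) := by
  have hN := h.four_le
  by_contra hne
  have hray := (mem_segment_iff_wbtw.mp hz).symm.sameRay_vsub_left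
  have hray' := (mem_segment_iff_wbtw.mp hz').sameRay_vsub_left
  rcases wbtw_total_of_sameRay_vsub_left
    (hray.symm.trans hray' fun h0 => absurd (sub_eq_zero.mp h0) hne) with hb | hb
  · rw [← h.periodic k, ← mem_segment_iff_wbtw] at hb
    exact h.vertex_notMem_edge (by lia) (by lia) hb
  · exact h.vertex_notMem_edge (by lia) (by lia) (mem_segment_iff_wbtw.mpr hb.symm)

lemma notMem_edge_of_mem_edge (h : IsPolygonalRegion N v R) (hz : z ∉ Set.range v)
    (hzk : z ∈ edge v k) (hkj : k < j) (hj : j < k + N) : z ∉ edge v j := by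
  intro hzj
  rcases (Nat.succ_le_iff.mpr hkj).eq_or_lt with rfl | hkj'
  · exact hz ⟨_, (h.eq_vertex_of_mem_edge_of_mem_edge_succ hzk hzj).symm⟩
  rcases (Nat.succ_le_iff.mpr hj).eq_or_lt with hj' | hj'
  · rw [← h.edge_periodic, ← hj'] at hzk
    exact hz ⟨_, (h.eq_vertex_of_mem_edge_of_mem_edge_succ hzj hzk).symm⟩
  · exact Set.disjoint_left.mp (h.disjoint_edge hkj' hj') hzk hzj

lemma windingSign_add_period (h : IsPolygonalRegion N v R) (a : ℕ) :
    windingSign v a (a + N) = windingSign v 0 N := by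
  induction a with
  | zero => rw [zero_add]
  | succ a ih =>
    rw [← ih]
    have hN := h.four_le
    funext x
    rw [windingSign, windingSign, h.periodic, h.periodic, halfTurn_self, halfTurn_self,
      add_right_comm, prod_Ico_succ_top (by lia), prod_eq_prod_Ico_succ_bot (a := a) (by lia),
      h.periodic, add_right_comm, h.periodic, mul_comm (halfTurn _ _ _)]

lemma windingSign_succ_add_period (h : IsPolygonalRegion N v R) (k : ℕ) :
    windingSign v (k + 1) (k + N) = windingSign v 0 N := by
  have hN := h.four_le
  rw [← h.windingSign_add_period k]
  funext x
  rw [windingSign, windingSign, h.periodic, halfTurn_self,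
    prod_eq_prod_Ico_succ_bot (a := k) (by lia), mul_one, mul_comm]

lemma notMem_loop_of_notMem_frontier (h : IsPolygonalRegion N v R) (hx : x ∉ frontier R) :
    x ∉ loop v a (a + N) := by
  rw [notMem_loop_iff, h.periodic, segment_same, Set.mem_singleton_iff]
  exact ⟨fun k _ hk => hx (h.edge_subset_frontier k hk),
    fun hxa => hx (hxa ▸ h.vertex_mem_frontier a)⟩

lemma exists_relativeWindingSign_eq_of_notMem_frontier (h : IsPolygonalRegion N v R)
    (hz : z ∉ frontier R) : ∃ c, ∀ᶠ x in 𝓝 z, relativeWindingSign N v R x = c := by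
  obtain ⟨r, hr, hball⟩ := Metric.mem_nhds_iff.mp (isClosed_frontier.isOpen_compl.mem_nhds hz)
  have hpre := (convex_ball z r).isPreconnected
  have hzr := Metric.mem_ball_self (x := z) hr
  refine ⟨relativeWindingSign N v R z, ?_⟩
  filter_upwards [Metric.ball_mem_nhds z hr] with x hx
  have hwind : windingSign v 0 N x = windingSign v 0 N z :=
    windingSign_eq_of_isPreconnected N.zero_le hpre (fun y hy => by
      simpa using h.notMem_loop_of_notMem_frontier (a := 0) (hball hy)) hx hzr
  have hmem : x ∈ R ↔ z ∈ R := by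
    rcases subset_interior_or_subset_compl hpre h.isClosed
      (Set.disjoint_left.mpr fun y hy => hball hy) with hin | hout
    · exact iff_of_true (interior_subset (hin hx)) (interior_subset (hin hzr))
    · exact iff_of_false (hout hx) (hout hzr)
  simp only [relativeWindingSign, hwind, hmem]

lemma eventually_mem_frontier_iff_side_eq_zero (h : IsPolygonalRegion N v R)
    (hzv : z ∉ Set.range v) (hz : z ∈ edge v k) :
    ∀ᶠ x in 𝓝 z, x ∈ frontier R ↔ side (v k) (v (k + 1)) x = 0 := by
  have hN := h.four_le
  have hother : ∀ᶠ x in 𝓝 z, ∀ j ∈ Ioo k (k + N), x ∉ edge v j := by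
    refine (eventually_all_finset _).mpr fun j hj => ?_
    rw [mem_Ioo] at hj
    exact (isClosed_segment _ _).isOpen_compl.mem_nhds
      (h.notMem_edge_of_mem_edge hzv hz hj.1 hj.2)
  have hopen : z ∈ openSegment ℝ (v k) (v (k + 1)) :=
    mem_openSegment_of_ne_left_right (fun h0 => hzv ⟨_, h0⟩) (fun h0 => hzv ⟨_, h0⟩) hz
  filter_upwards [hother, eventually_mem_segment_of_side_eq_zero
    (h.vertex_ne (by lia) (by lia)) hopen] with x hx hseg
  refine ⟨fun hxfr => ?_, fun h0 => h.edge_subset_frontier k (hseg h0)⟩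
  obtain ⟨j, hj, hxj⟩ := h.exists_mem_edge k hxfr
  rw [mem_Ico] at hj
  rcases hj.1.eq_or_lt with rfl | hkj
  · exact side_eq_zero_of_mem_segment hxj
  · exact absurd hxj (hx j (mem_Ioo.mpr ⟨hkj, hj.2⟩))

lemma exists_windingSign_eq_of_side_edge (h : IsPolygonalRegion N v R)
    (hzv : z ∉ Set.range v) (hz : z ∈ edge v k) :
    ∃ c ≠ 0, ∀ᶠ x in 𝓝 z, (0 < side (v k) (v (k + 1)) x → windingSign v 0 N x = c) ∧
      (side (v k) (v (k + 1)) x < 0 → windingSign v 0 N x = -c) := by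
  have hN := h.four_le
  have hopen : z ∈ openSegment ℝ (v k) (v (k + 1)) :=
    mem_openSegment_of_ne_left_right (fun h0 => hzv ⟨_, h0⟩) (fun h0 => hzv ⟨_, h0⟩) hz
  have hne : v k ≠ v (k + 1) := h.vertex_ne (by lia) (by lia)
  rw [← h.periodic k] at hopen hne ⊢
  rw [← h.windingSign_succ_add_period k]
  refine exists_windingSign_eq_of_side (by lia) hne hopen fun j hj => ?_
  rw [mem_Ico] at hj
  exact h.notMem_edge_of_mem_edge hzv hz (by lia) (by lia)

lemma exists_relativeWindingSign_eq_of_mem_frontier (h : IsPolygonalRegion N v R)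
    (hreg : R ⊆ closure (interior R)) (hzv : z ∉ Set.range v) (hz : z ∈ frontier R) :
    ∃ c, ∀ᶠ x in 𝓝 z, x ∉ frontier R → relativeWindingSign N v R x = c := by
  obtain ⟨k, -, hk⟩ := h.exists_mem_edge 0 hz
  have hfr := h.eventually_mem_frontier_iff_side_eq_zero hzv hk
  obtain ⟨c, -, hc⟩ := h.exists_windingSign_eq_of_side_edge hzv hk
  rcases eventually_mem_iff_side h.isClosed hreg hz hfr with hside | hside
  · refine ⟨c, ?_⟩
    filter_upwards [hfr, hc, hside] with x hx hxc hxR hxfr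
    rcases lt_or_gt_of_ne (mt hx.mpr hxfr) with hlt | hlt
    · simp [relativeWindingSign, hxc.2 hlt, hxR hxfr, hlt.not_gt]
    · simp [relativeWindingSign, hxc.1 hlt, hxR hxfr, hlt]
  · refine ⟨-c, ?_⟩
    filter_upwards [hfr, hc, hside] with x hx hxc hxR hxfr
    rcases lt_or_gt_of_ne (mt hx.mpr hxfr) with hlt | hlt
    · simp [relativeWindingSign, hxc.2 hlt, hxR hxfr, hlt]
    · simp [relativeWindingSign, hxc.1 hlt, hxR hxfr, hlt.not_gt]

lemma relativeWindingSign_eq (h : IsPolygonalRegion N v R) (hreg : R ⊆ closure (interior R))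
    (hx : x ∉ frontier R) (hy : y ∉ frontier R) :
    relativeWindingSign N v R x = relativeWindingSign N v R y := by
  have hconn : IsPreconnected (Set.range v)ᶜ :=
    ((Set.countable_range v).isConnected_compl_of_one_lt_rank (by simp)).isPreconnected
  have hdense : Dense (frontier R)ᶜ :=
    interior_eq_empty_iff_dense_compl.mp (interior_frontier h.isClosed)
  have hvertex : ∀ x ∉ frontier R, x ∈ (Set.range v)ᶜ := fun x hx ⟨k, hk⟩ =>
    hx (hk ▸ h.vertex_mem_frontier k)
  refine eq_of_eventually_const hconn hdense (fun z hz => ?_) ⟨hvertex x hx, hx⟩ ⟨hvertex y hy, hy⟩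
  by_cases hzfr : z ∈ frontier R
  · exact h.exists_relativeWindingSign_eq_of_mem_frontier hreg hz hzfr
  · obtain ⟨c, hc⟩ := h.exists_relativeWindingSign_eq_of_notMem_frontier hzfr
    exact ⟨c, hc.mono fun w hw _ => hw⟩

lemma windingSign_eq_of_mem_interior (h : IsPolygonalRegion N v R)
    (hreg : R ⊆ closure (interior R)) (hx : x ∈ interior R) (hy : y ∈ interior R) :
    windingSign v a (a + N) x = windingSign v a (a + N) y := by
  have hrel := h.relativeWindingSign_eq hreg (fun hfr => hfr.2 hx) (fun hfr => hfr.2 hy)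
  rw [h.windingSign_add_period]
  simpa [relativeWindingSign, interior_subset hx, interior_subset hy] using hrel

lemma notMem_loop_of_mem_interior (h : IsPolygonalRegion N v R) (hx : x ∈ interior R)
    (hxd : x ∉ openSegment ℝ (v b) (v a)) : x ∉ loop v a b := by
  rw [notMem_loop_iff, ← insert_endpoints_openSegment]
  refine ⟨fun k _ hk => (h.edge_subset_frontier k hk).2 hx, ?_⟩
  rintro (rfl | rfl | hxo)
  · exact (h.vertex_mem_frontier b).2 hx
  · exact (h.vertex_mem_frontier a).2 hx
  · exact hxd hxo

lemma vertex_notMem_loop (h : IsPolygonalRegion N v R) (hab : a < b)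
    (hd : openSegment ℝ (v b) (v a) ⊆ interior R) (hbk : b < k) (hk : k < a + N) :
    v k ∉ loop v a b := by
  rw [notMem_loop_iff, ← insert_endpoints_openSegment]
  refine ⟨fun j hj => ?_, ?_⟩
  · rw [mem_Ico] at hj
    exact h.vertex_notMem_edge (by lia) (by lia)
  · rintro (hkb | hka | hko)
    · exact h.vertex_ne hbk (by lia) hkb.symm
    · exact h.vertex_ne (hab.trans hbk) hk hka.symm
    · exact (h.vertex_mem_frontier k).2 (hd hko)

lemma notMem_loop_of_mem_edge (h : IsPolygonalRegion N v R) (hab : a < b)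
    (hd : openSegment ℝ (v b) (v a) ⊆ interior R) (hbk : b < k) (hk : k + 1 < a + N)
    (hx : x ∈ edge v k) : x ∉ loop v a b := by
  rw [notMem_loop_iff, ← insert_endpoints_openSegment]
  refine ⟨fun j hj hxj => ?_, ?_⟩
  · rw [mem_Ico] at hj
    exact Set.disjoint_left.mp (h.disjoint_edge (by lia) (by lia)) hxj hx
  · rintro (rfl | rfl | hxo)
    · rw [← h.periodic b] at hx
      exact h.vertex_notMem_edge (by lia) (by lia) hx
    · rw [← h.periodic a] at hx
      exact h.vertex_notMem_edge (by lia) (by lia) hx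
    · exact (h.edge_subset_frontier k hx).2 (hd hxo)

lemma windingSign_vertex_eq (h : IsPolygonalRegion N v R) (hab : a < b)
    (hd : openSegment ℝ (v b) (v a) ⊆ interior R) (hbk : b < k) (hkl : k ≤ l) (hl : l < a + N) :
    windingSign v a b (v k) = windingSign v a b (v l) := by
  induction l, hkl using Nat.le_induction with
  | base => rfl
  | succ l hkl ih =>
    rw [ih (by lia)]
    exact windingSign_eq_of_isPreconnected hab.le (convex_segment (v l) (v (l + 1))).isPreconnected
      (fun x hx => h.notMem_loop_of_mem_edge hab hd (by lia) hl hx)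
      (left_mem_segment ℝ _ _) (right_mem_segment ℝ _ _)

lemma windingSign_eq_vertex (h : IsPolygonalRegion N v R) (hab : a < b)
    (hd : openSegment ℝ (v b) (v a) ⊆ interior R) {O : Set ℂ} (hO : IsPreconnected O)
    (hOR : O ⊆ interior R) (hOd : Disjoint O (openSegment ℝ (v b) (v a))) (hbk : b < k)
    (hk : k < a + N) (hkO : v k ∈ closure O) (hbl : b < l) (hl : l < a + N) (hx : x ∈ O) :
    windingSign v a b x = windingSign v a b (v l) := by
  have hinsert : IsPreconnected (insert (v k) O) :=
    hO.subset_closure (Set.subset_insert _ _) (Set.insert_subset hkO subset_closure)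
  have hxk : windingSign v a b x = windingSign v a b (v k) := by
    refine windingSign_eq_of_isPreconnected hab.le hinsert (fun y hy => ?_)
      (Set.mem_insert_of_mem _ hx) (Set.mem_insert _ _)
    rcases hy with rfl | hy
    · exact h.vertex_notMem_loop hab hd hbk hk
    · exact h.notMem_loop_of_mem_interior (hOR hy) (Set.disjoint_left.mp hOd hy)
  rw [hxk]
  rcases le_total k l with hkl | hlk
  · exact h.windingSign_vertex_eq hab hd hbk hkl hl
  · exact (h.windingSign_vertex_eq hab hd hbl hlk hk).symm

lemma windingSign_mul_windingSign_eq (h : IsPolygonalRegion N v R)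
    (hreg : R ⊆ closure (interior R)) (hab : a < b) (hba : b < a + N)
    (hx : x ∈ interior R \ openSegment ℝ (v b) (v a))
    (hy : y ∈ interior R \ openSegment ℝ (v b) (v a)) :
    windingSign v a b x * windingSign v b (a + N) x =
      windingSign v a b y * windingSign v b (a + N) y := by
  have hmul : ∀ z ∈ interior R \ openSegment ℝ (v b) (v a),
      windingSign v a b z * windingSign v b (a + N) z = windingSign v a (a + N) z := fun z hz =>
    windingSign_mul_windingSign hab.le hba.le (h.periodic a)
      (notMem_loop_iff.mp (h.notMem_loop_of_mem_interior (a := a) hz.1 hz.2)).2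
  rw [hmul x hx, hmul y hy, h.windingSign_eq_of_mem_interior hreg hx.1 hy.1]

theorem not_separated_by_diagonal (h : IsPolygonalRegion N v R) {ι : Type*} {O : ι → Set ℂ}
    (hO : ∀ t, IsPreconnected (O t)) (hOR : ∀ t, O t ⊆ interior R)
    (hcover : R ⊆ ⋃ t, closure (O t)) {a u b w : ℕ} (hau : a < u) (hub : u < b) (hbw : b < w)
    (hwa : w < a + N) (hd : openSegment ℝ (v b) (v a) ⊆ interior R)
    (hOd : ∀ t, Disjoint (O t) (openSegment ℝ (v b) (v a)))
    (hvertex : ∀ t, ∃ k, a < k ∧ k < a + N ∧ k ≠ b ∧ v k ∈ closure (O t)) (s : ι) :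
    ¬ (v u ∈ closure (O s) ∧ v w ∈ closure (O s)) := by
  rintro ⟨hus, hws⟩
  have hd' : openSegment ℝ (v (a + N)) (v b) = openSegment ℝ (v b) (v a) := by
    rw [h.periodic, openSegment_symm]
  have hreg : R ⊆ closure (interior R) :=
    hcover.trans (Set.iUnion_subset fun t => closure_mono (hOR t))
  have hupper : ∀ t k, b < k → k < a + N → v k ∈ closure (O t) → ∀ x ∈ O t,
      windingSign v a b x = windingSign v a b (v w) := fun t k hbk hk hkt x hx =>
    h.windingSign_eq_vertex (by lia) hd (hO t) (hOR t) (hOd t) hbk hk hkt hbw hwa hx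
  have hlower : ∀ t k, a < k → k < b → v k ∈ closure (O t) → ∀ x ∈ O t,
      windingSign v b (a + N) x = windingSign v b (a + N) (v (u + N)) := fun t k hak hkb hkt x hx =>
    h.windingSign_eq_vertex (k := k + N) (by lia) (hd' ▸ hd) (hO t) (hOR t) (hd' ▸ hOd t) (by lia)
      (by lia) (by rwa [h.periodic]) (by lia) (by lia) hx
  -- On the piece `s` both signs are known, hence so is their product on all of `interior R`.
  obtain ⟨y, hy⟩ := closure_nonempty_iff.mp ⟨_, hus⟩
  have hconst : ∀ t, ∀ x ∈ O t, windingSign v a b x = windingSign v a b (v w) := by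
    intro t x hx
    obtain ⟨k, hak, hk, hkb, hkt⟩ := hvertex t
    rcases lt_or_gt_of_ne hkb with hkb | hbk
    · refine mul_right_cancel₀ (windingSign_ne_zero v b (a + N) (v (u + N))) ?_
      rw [← hlower t k hak hkb hkt x hx, h.windingSign_mul_windingSign_eq hreg (by lia) (by lia)
        ⟨hOR t hx, Set.disjoint_left.mp (hOd t) hx⟩ ⟨hOR s hy, Set.disjoint_left.mp (hOd s) hy⟩,
        hupper s w hbw hwa hws y hy, hlower s u hau hub hus y hy, hlower t k hak hkb hkt x hx]
    · exact hupper t k hbk hk hkt x hx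
  have hz := midpoint_mem_openSegment (𝕜 := ℝ) (v b) (v a)
  obtain ⟨x, hx, x', hx', hne⟩ := exists_windingSign_ne (D := ⋃ t, O t) (by lia)
    (h.vertex_ne (hau.trans hub) (hbw.trans hwa)).symm hz
    (fun k _ hk => (h.edge_subset_frontier k hk).2 (hd hz))
    (mem_of_superset (mem_interior_iff_mem_nhds.mp (hd hz))
      (hcover.trans (Set.iUnion_subset fun t => closure_mono (Set.subset_iUnion O t))))
  obtain ⟨t, ht⟩ := Set.mem_iUnion.mp hx
  obtain ⟨t', ht'⟩ := Set.mem_iUnion.mp hx'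
  exact hne ((hconst t x ht).trans (hconst t' x' ht').symm)

end IsPolygonalRegion

section Noncrossing

open Finset

/-- A graph on a linearly ordered vertex set is noncrossing if, with the vertices placed in order on
a circle and the edges drawn as chords, no two edges cross. -/
def IsNoncrossing {V : Type*} [LinearOrder V] (G : SimpleGraph V) : Prop :=
  ∀ ⦃i k j l⦄, i < k → k < j → j < l → G.Adj i j → ¬ G.Adj k l

lemma exists_maximal_adj_or_covBy {V : Type*} [LinearOrder V] [LocallyFiniteOrder V]
    (G : SimpleGraph V) {i j : V} (hij : i < j) (hcov : ¬ i ⋖ j) :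
    ∃ k, i < k ∧ k < j ∧ (G.Adj i k ∨ i ⋖ k) ∧ ∀ l, k < l → l < j → ¬ G.Adj i l := by
  obtain ⟨m, him, hmj⟩ := exists_covBy_le_of_lt hij
  have hmj' : m < j := hmj.lt_of_ne fun h => hcov (h ▸ him)
  have hne : ((Ioo i j).filter fun k => G.Adj i k ∨ i ⋖ k).Nonempty :=
    ⟨m, mem_filter.mpr ⟨mem_Ioo.mpr ⟨him.lt, hmj'⟩, .inr him⟩⟩
  obtain ⟨hk, hadj⟩ := mem_filter.mp (max'_mem _ hne)
  rw [mem_Ioo] at hk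
  refine ⟨_, hk.1, hk.2, hadj, fun l hkl hlj hil => hkl.not_ge (le_max' _ _ ?_)⟩
  exact mem_filter.mpr ⟨mem_Ioo.mpr ⟨hk.1.trans hkl, hlj⟩, .inl hil⟩

lemma IsNoncrossing.exists_coloring_Icc {V : Type*} [LinearOrder V] [LocallyFiniteOrder V]
    {G : SimpleGraph V} (hG : IsNoncrossing G) {i j : V} (hij : i < j) {ci cj : Fin 3}
    (hc : ci ≠ cj) : ∃ c : V → Fin 3, c i = ci ∧ c j = cj ∧
      ∀ ⦃x y⦄, i ≤ x → x < y → y ≤ j → G.Adj x y → c x ≠ c y := by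
  induction hm : #(Ioo i j) using Nat.strong_induction_on generalizing i j ci cj with
  | _ m ih =>
    subst hm
    by_cases hcov : i ⋖ j
    · refine ⟨fun x => if x = i then ci else cj, by simp, by simp [hij.ne'], ?_⟩
      intro x y hix hxy hyj _
      have hxi : x = i := (hix.eq_or_lt.resolve_right
        fun h => hcov.2 h (hxy.trans_le hyj)).symm
      simpa [hxi, (hxi ▸ hxy).ne'] using hc
    obtain ⟨k, hik, hkj, hsplit, hmax⟩ := exists_maximal_adj_or_covBy G hij hcov
    obtain ⟨ck, hck, hck'⟩ : ∃ ck : Fin 3, ci ≠ ck ∧ ck ≠ cj := by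
      revert ci cj; decide
    have hk : k ∈ Ioo i j := mem_Ioo.mpr ⟨hik, hkj⟩
    obtain ⟨c₁, h₁i, h₁k, h₁⟩ := ih _ (card_lt_card (ssubset_of_subset_of_ne
      (Ioo_subset_Ioo_right hkj.le) fun h => by simp [← h] at hk)) hik hck rfl
    obtain ⟨c₂, h₂k, h₂j, h₂⟩ := ih _ (card_lt_card (ssubset_of_subset_of_ne
      (Ioo_subset_Ioo_left hik.le) fun h => by simp [← h] at hk)) hkj hck' rfl
    refine ⟨fun x => if x ≤ k then c₁ x else c₂ x, by simp [hik.le, h₁i],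
      by simp [hkj.not_ge, h₂j], fun x y hix hxy hyj hadj => ?_⟩
    rcases le_or_gt y k with hyk | hky
    · simpa [hyk, hxy.le.trans hyk] using h₁ hix hxy hyk hadj
    rcases lt_trichotomy x k with hxk | rfl | hkx
    · rcases hix.eq_or_lt with rfl | hix
      · have hyj : y = j := hyj.eq_or_lt.resolve_right fun h => hmax y hky h hadj
        simpa [hik.le, hky.not_ge, hyj, hkj.not_ge, h₁i, h₂j] using hc
      · exact absurd hadj (hG hix hxk hky (hsplit.resolve_right fun h => h.2 hix hxk))
    · simpa [hky.not_ge, h₁k, ← h₂k] using h₂ le_rfl hxy hyj hadj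
    · simpa [hky.not_ge, hkx.not_ge] using h₂ hkx.le hxy hyj hadj

theorem IsNoncrossing.colorable_three {V : Type*} [LinearOrder V] [Finite V] {G : SimpleGraph V}
    (hG : IsNoncrossing G) : G.Colorable 3 := by
  have := Fintype.ofFinite V
  have : LocallyFiniteOrder V := Fintype.toLocallyFiniteOrder
  rcases subsingleton_or_nontrivial V with hV | hV
  · exact ⟨SimpleGraph.Coloring.mk 0 fun h => absurd (Subsingleton.elim _ _) h.ne⟩
  obtain ⟨i, hi⟩ := Finite.exists_min (id : V → V)
  obtain ⟨j, hj⟩ := Finite.exists_max (id : V → V)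
  have hij : i < j := by
    obtain ⟨x, y, hxy⟩ := exists_pair_lt V
    exact (hi x).trans_lt (hxy.trans_le (hj y))
  obtain ⟨c, -, -, hc⟩ := hG.exists_coloring_Icc hij (zero_ne_one (α := Fin 3))
  refine ⟨SimpleGraph.Coloring.mk c fun {x y} hadj => ?_⟩
  rcases lt_or_gt_of_ne hadj.ne with hxy | hyx
  · exact hc (hi x) hxy (hj y) hadj
  · exact (hc (hi y) hyx (hj x) hadj.symm).symm

end Noncrossing

section FinIndex

lemma finOfNat_succ (k : ℕ) : Fin.ofNat n (k + 1) = Fin.ofNat n k + 1 :=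
  Fin.ext (by simp [Fin.val_add])

lemma finOfNat_ne {i j : ℕ} (hij : i < j) (hj : j < i + n) : Fin.ofNat n i ≠ Fin.ofNat n j := by
  intro h
  have hmod : i ≡ j [MOD n] := congrArg Fin.val h
  have := Nat.le_of_dvd (by lia) ((Nat.modEq_iff_dvd' hij.le).mp hmod)
  lia

lemma exists_finOfNat_eq_of_ne {i k : Fin n} (hki : k ≠ i) :
    ∃ m, i.val < m ∧ m < i.val + n ∧ Fin.ofNat n m = k := by
  rcases lt_or_gt_of_ne (Fin.val_ne_of_ne hki) with h | h
  · exact ⟨k + n, by lia, by lia, Fin.ext (by simp [Nat.mod_eq_of_lt k.isLt])⟩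
  · exact ⟨k, h, by lia, Fin.ofNat_val_eq_self k⟩

lemma ne_add_one_of_val_lt {i j : Fin n} (hij : i.val + 1 < j.val) (hji : j.val + 1 < i.val + n) :
    j ≠ i + 1 ∧ i ≠ j + 1 := by
  have hi := finOfNat_ne (n := n) hij (by lia)
  have hj := finOfNat_ne (n := n) (i := j + 1) (j := i + n) hji (by lia)
  have hin : Fin.ofNat n (i.val + n) = i := Fin.ext (by simp [Nat.mod_eq_of_lt i.isLt])
  rw [finOfNat_succ, Fin.ofNat_val_eq_self, Fin.ofNat_val_eq_self] at hi
  rw [finOfNat_succ, Fin.ofNat_val_eq_self, hin] at hj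
  exact ⟨hi.symm, hj.symm⟩

end FinIndex

lemma exists_triVerts_eq {m : ℕ} {t : Fin m × Fin m × Fin m} {i j : Fin m}
    (hi : i ∈ triVerts t) (hj : j ∈ triVerts t) (hij : i ≠ j) :
    ∃ k, triVerts t = {i, j, k} := by
  obtain ⟨a, b, c⟩ := t
  rcases hi with rfl | rfl | rfl <;> rcases hj with rfl | rfl | rfl
  all_goals first
    | exact absurd rfl hij
    | exact ⟨a, by ext; grind [triVerts]⟩
    | exact ⟨b, by ext; grind [triVerts]⟩
    | exact ⟨c, by ext; grind [triVerts]⟩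

/-- The identification of the two models of the plane. -/
def toComplex : (ℝ × ℝ) ≃L[ℝ] ℂ := Complex.equivRealProdCLM.symm

lemma toComplex_image_openSegment (x y : ℝ × ℝ) :
    toComplex '' openSegment ℝ x y = openSegment ℝ (toComplex x) (toComplex y) :=
  image_openSegment ℝ (toComplex : (ℝ × ℝ) →ₗ[ℝ] ℂ).toAffineMap x y

lemma toComplex_image_segment (x y : ℝ × ℝ) :
    toComplex '' segment ℝ x y = segment ℝ (toComplex x) (toComplex y) :=
  image_segment ℝ (toComplex : (ℝ × ℝ) →ₗ[ℝ] ℂ).toAffineMap x y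

lemma toComplex_image_interior (s : Set (ℝ × ℝ)) :
    toComplex '' interior s = interior (toComplex '' s) :=
  toComplex.toHomeomorph.image_interior s

namespace SimplePolygon

variable (P : SimplePolygon n) {i j k : Fin n}

/-- The vertices of `P` as points of the complex plane. -/
def complexVertex (i : Fin n) : ℂ := toComplex (P.vertex i)

/-- The vertices of `P` as an `n`-periodic sequence of points of the complex plane. -/
def vertexSeq (k : ℕ) : ℂ := P.complexVertex (Fin.ofNat n k)

/-- The region of `P` as a subset of the complex plane. -/
def complexRegion : Set ℂ := toComplex '' P.region

lemma complexVertex_injective : Function.Injective P.complexVertex :=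
  toComplex.injective.comp P.inj

lemma vertexSeq_val (i : Fin n) : P.vertexSeq i = P.complexVertex i := by
  rw [vertexSeq, Fin.ofNat_val_eq_self]

lemma edge_vertexSeq (k : ℕ) : edge P.vertexSeq k =
    toComplex '' segment ℝ (P.vertex (Fin.ofNat n k)) (P.vertex (Fin.ofNat n k + 1)) := by
  rw [toComplex_image_segment, edge, vertexSeq, vertexSeq, finOfNat_succ, complexVertex,
    complexVertex]

lemma frontier_complexRegion : frontier P.complexRegion = ⋃ k, edge P.vertexSeq k := by
  have hfr : frontier P.region = ⋃ i, segment ℝ (P.vertex i) (P.vertex (i + 1)) :=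
    P.frontier_sub.antisymm (Set.iUnion_subset P.edges_boundary)
  have himage : frontier P.complexRegion = toComplex '' frontier P.region :=
    (toComplex.toHomeomorph.image_frontier P.region).symm
  simp only [himage, hfr, Set.image_iUnion, edge_vertexSeq]
  have hsurj : Function.Surjective (Fin.ofNat n) := fun i => ⟨i, Fin.ofNat_val_eq_self i⟩
  exact (hsurj.iUnion_comp fun i =>
    toComplex '' segment ℝ (P.vertex i) (P.vertex (i + 1))).symm

lemma isPolygonalRegion (hn : 4 ≤ n) : IsPolygonalRegion n P.vertexSeq P.complexRegion where
  four_le := hn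
  periodic k := congrArg P.complexVertex (Fin.ext (by simp))
  vertex_ne i j hij hj := P.complexVertex_injective.ne (finOfNat_ne hij hj)
  disjoint_edge i j hij hj := by
    rw [edge_vertexSeq, edge_vertexSeq, Set.disjoint_image_iff toComplex.injective,
      Set.disjoint_iff_inter_eq_empty]
    refine P.edges_noncross _ _ (finOfNat_ne (by lia) (by lia)) ?_ ?_ <;> rw [← finOfNat_succ]
    · exact finOfNat_ne hij (by lia)
    · rw [ne_comm]
      exact finOfNat_ne (by lia) hj
  isClosed := (P.compact.image toComplex.continuous).isClosed
  frontier_eq := P.frontier_complexRegion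

variable {P}

lemma sideOk.symm (h : P.sideOk i j) : P.sideOk j i := by
  rcases h with h | h | h
  · exact .inr (.inl h)
  · exact .inl h
  · exact .inr (.inr ⟨h.1.symm, by rw [openSegment_symm]; exact h.2⟩)

lemma IsDiagonal.openSegment_subset_interior (h : P.IsDiagonal i j) :
    openSegment ℝ (P.complexVertex i) (P.complexVertex j) ⊆ interior P.complexRegion := by
  rw [complexVertex, complexVertex, complexRegion, ← toComplex_image_openSegment,
    ← toComplex_image_interior]
  exact Set.image_mono h.2

lemma sideOk.complexVertex_notMem_segment (hn : 4 ≤ n) (h : P.sideOk i j) (hki : k ≠ i)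
    (hkj : k ≠ j) :
    P.complexVertex k ∉ segment ℝ (P.complexVertex i) (P.complexVertex j) := by
  have hP := P.isPolygonalRegion hn
  have hside : ∀ i, k ≠ i → k ≠ i + 1 →
      P.complexVertex k ∉ segment ℝ (P.complexVertex i) (P.complexVertex (i + 1)) := by
    intro i hki hki'
    obtain ⟨m, him, hm, rfl⟩ := exists_finOfNat_eq_of_ne hki
    have hne : m ≠ i + 1 := by
      rintro rfl
      exact hki' (by rw [finOfNat_succ, Fin.ofNat_val_eq_self])
    have := hP.vertex_notMem_edge (i := i) (j := m) (by lia) hm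
    rwa [edge, vertexSeq, vertexSeq, vertexSeq, finOfNat_succ, Fin.ofNat_val_eq_self] at this
  rcases h with rfl | rfl | hd
  · exact hside i hki hkj
  · rw [segment_symm]
    exact hside j hkj hki
  · rw [← insert_endpoints_openSegment]
    rintro (h | h | h)
    · exact hki (P.complexVertex_injective h)
    · exact hkj (P.complexVertex_injective h)
    · have hk := hP.vertex_mem_frontier k
      rw [P.vertexSeq_val] at hk
      exact hk.2 (hd.openSegment_subset_interior h)

variable (P)

lemma toComplex_image_tri (t : Fin n × Fin n × Fin n) :
    toComplex '' P.tri t = convexHull ℝ (P.complexVertex '' triVerts t) := by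
  have hverts : P.complexVertex '' triVerts t =
      toComplex '' {P.vertex t.1, P.vertex t.2.1, P.vertex t.2.2} := by
    simp only [triVerts, Set.image_insert_eq, Set.image_singleton, complexVertex]
  rw [hverts, tri]
  exact (toComplex : (ℝ × ℝ) →ₗ[ℝ] ℂ).image_convexHull _

end SimplePolygon

namespace Triangulation

variable {P : SimplePolygon n} (T : Triangulation P) {i j k l : Fin n}

/-- The open triangles of `T` in the complex plane. -/
def cell (t : T.tris) : Set ℂ := interior (convexHull ℝ (P.complexVertex '' triVerts t.1))

variable {t s : T.tris}

lemma sideOk_of_mem_triVerts (hi : i ∈ triVerts t.1) (hj : j ∈ triVerts t.1) (hij : i ≠ j) :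
    P.sideOk i j := by
  obtain ⟨h₁, h₂, h₃⟩ := T.sides t t.2
  rcases hi with rfl | rfl | rfl <;> rcases hj with rfl | rfl | rfl <;>
    first | exact absurd rfl hij | assumption | (apply SimplePolygon.sideOk.symm; assumption)

lemma exists_mem_triVerts_ne_ne (t : T.tris) (i j : Fin n) :
    ∃ k ∈ triVerts t.1, k ≠ i ∧ k ≠ j := by
  obtain ⟨h₁, h₂, h₃⟩ := T.distinct t t.2
  by_contra! h
  have h₁' := h t.1.1 (.inl rfl)
  have h₂' := h t.1.2.1 (.inr (.inl rfl))
  have h₃' := h t.1.2.2 (.inr (.inr rfl))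
  grind

lemma not_collinear (hn : 4 ≤ n) (t : T.tris) : ¬ Collinear ℝ
    {P.complexVertex t.1.1, P.complexVertex t.1.2.1, P.complexVertex t.1.2.2} := by
  obtain ⟨h₁₂, h₂₃, h₁₃⟩ := T.distinct t t.2
  obtain ⟨s₁₂, s₂₃, s₁₃⟩ := T.sides t t.2
  intro h
  rcases h.wbtw_or_wbtw_or_wbtw with h | h | h <;> rw [← mem_segment_iff_wbtw] at h
  · exact s₁₃.complexVertex_notMem_segment hn h₁₂.symm h₂₃ h
  · exact s₁₂.symm.complexVertex_notMem_segment hn h₂₃.symm h₁₃.symm h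
  · exact s₂₃.symm.complexVertex_notMem_segment hn h₁₃ h₁₂ h

lemma cell_nonempty (hn : 4 ≤ n) (t : T.tris) : (T.cell t).Nonempty := by
  rw [cell, interior_convexHull_nonempty_iff_affineSpan_eq_top, triVerts, Set.image_insert_eq,
    Set.image_pair]
  have hspan := (affineIndependent_iff_not_collinear_set.mpr
    (T.not_collinear hn t)).affineSpan_eq_top_iff_card_eq_finrank_add_one.mpr (by simp)
  rwa [Matrix.range_cons, Matrix.range_cons_cons_empty, Set.singleton_union] at hspan

lemma convexHull_subset_closure_cell (hn : 4 ≤ n) (t : T.tris) :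
    convexHull ℝ (P.complexVertex '' triVerts t.1) ⊆ closure (T.cell t) := by
  rw [cell, (convex_convexHull ℝ _).closure_interior_eq_closure_of_nonempty_interior
    (T.cell_nonempty hn t)]
  exact subset_closure

lemma complexVertex_mem_closure_cell (hn : 4 ≤ n) (hi : i ∈ triVerts t.1) :
    P.complexVertex i ∈ closure (T.cell t) :=
  T.convexHull_subset_closure_cell hn t (subset_convexHull ℝ _ (Set.mem_image_of_mem _ hi))

lemma isPreconnected_cell (t : T.tris) : IsPreconnected (T.cell t) :=
  (convex_convexHull ℝ _).interior.isPreconnected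

lemma cell_subset_interior (t : T.tris) : T.cell t ⊆ interior P.complexRegion := by
  rw [cell, ← P.toComplex_image_tri, SimplePolygon.complexRegion, ← T.covers]
  exact interior_mono (Set.image_mono (Set.subset_biUnion_of_mem (u := P.tri) t.2))

lemma complexRegion_subset_iUnion_closure_cell (hn : 4 ≤ n) :
    P.complexRegion ⊆ ⋃ t, closure (T.cell t) := by
  rw [SimplePolygon.complexRegion, ← T.covers, Set.image_iUnion₂]
  refine Set.iUnion₂_subset fun t ht => ?_
  rw [P.toComplex_image_tri]
  exact Set.subset_iUnion_of_subset ⟨t, ht⟩ (T.convexHull_subset_closure_cell hn ⟨t, ht⟩)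

lemma disjoint_cell (hts : t ≠ s) : Disjoint (T.cell t) (T.cell s) := by
  rw [cell, cell, ← P.toComplex_image_tri, ← P.toComplex_image_tri, ← toComplex_image_interior,
    ← toComplex_image_interior, Set.disjoint_image_iff toComplex.injective,
    Set.disjoint_iff_inter_eq_empty]
  exact T.int_disjoint t t.2 s s.2 (Subtype.coe_injective.ne hts)

lemma disjoint_cell_openSegment (hn : 4 ≤ n) (hi : i ∈ triVerts t.1) (hj : j ∈ triVerts t.1)
    (hij : i ≠ j) (s : T.tris) :
    Disjoint (T.cell s) (openSegment ℝ (P.complexVertex i) (P.complexVertex j)) := by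
  rcases eq_or_ne s t with rfl | hst
  · obtain ⟨k, hk⟩ := exists_triVerts_eq hi hj hij
    refine Set.disjoint_right.mpr fun x hx => ?_
    rw [cell, hk, Set.image_insert_eq, Set.image_pair]
    exact notMem_interior_convexHull_of_mem_segment (P.complexVertex_injective.ne hij) _
      (openSegment_subset_segment ℝ _ _ hx)
  · refine ((T.disjoint_cell hst).closure_right isOpen_interior).mono_right ?_
    refine .trans ?_ (T.convexHull_subset_closure_cell hn t)
    exact (convex_convexHull ℝ _).openSegment_subset
      (subset_convexHull ℝ _ (Set.mem_image_of_mem _ hi))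
      (subset_convexHull ℝ _ (Set.mem_image_of_mem _ hj))

lemma not_crossing (hik : i < k) (hkj : k < j) (hjl : j < l) (hi : i ∈ triVerts t.1)
    (hj : j ∈ triVerts t.1) : ¬ (k ∈ triVerts s.1 ∧ l ∈ triVerts s.1) := by
  rintro ⟨hk, hl⟩
  have hn : 4 ≤ n := by lia
  have hij := (hik.trans hkj).ne
  obtain ⟨hsucc, hsucc'⟩ := ne_add_one_of_val_lt (i := i) (j := j) (by lia) (by lia)
  have hd : P.IsDiagonal j i := ((T.sideOk_of_mem_triVerts hj hi hij.symm).resolve_left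
    hsucc').resolve_left hsucc
  refine (P.isPolygonalRegion hn).not_separated_by_diagonal (O := T.cell) (a := i) (u := k) (b := j)
    (w := l) T.isPreconnected_cell T.cell_subset_interior
    (T.complexRegion_subset_iUnion_closure_cell hn) hik hkj hjl (by lia) ?_ ?_ (fun r => ?_) s ?_
  · simpa only [P.vertexSeq_val] using hd.openSegment_subset_interior
  · simpa only [P.vertexSeq_val] using T.disjoint_cell_openSegment hn hj hi hij.symm
  · obtain ⟨x, hx, hxi, hxj⟩ := T.exists_mem_triVerts_ne_ne r i j
    obtain ⟨m, him, hm, rfl⟩ := exists_finOfNat_eq_of_ne hxi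
    refine ⟨m, him, hm, ?_, T.complexVertex_mem_closure_cell hn hx⟩
    rintro rfl
    exact hxj (Fin.ofNat_val_eq_self j)
  · simpa only [P.vertexSeq_val] using And.intro (T.complexVertex_mem_closure_cell hn hk)
      (T.complexVertex_mem_closure_cell hn hl)

lemma exists_mem_triVerts_of_adj (hadj : (polyGraph T).Adj i j) (hij : i.val + 1 < j.val)
    (hji : j.val + 1 < i.val + n) : ∃ t : T.tris, i ∈ triVerts t.1 ∧ j ∈ triVerts t.1 := by
  obtain ⟨hsucc, hsucc'⟩ := ne_add_one_of_val_lt hij hji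
  rw [polyGraph, SimpleGraph.fromRel_adj] at hadj
  rcases hadj.2 with (h | ⟨t, ht, hi, hj⟩) | (h | ⟨t, ht, hj, hi⟩)
  · exact absurd h hsucc
  · exact ⟨⟨t, ht⟩, hi, hj⟩
  · exact absurd h hsucc'
  · exact ⟨⟨t, ht⟩, hi, hj⟩

theorem isNoncrossing_polyGraph : IsNoncrossing (polyGraph T) := by
  intro i k j l hik hkj hjl hij hkl
  obtain ⟨t, hi, hj⟩ := T.exists_mem_triVerts_of_adj hij (by lia) (by lia)
  obtain ⟨s, hk, hl⟩ := T.exists_mem_triVerts_of_adj hkl (by lia) (by lia)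
  exact T.not_crossing hik hkj hjl hi hj ⟨hk, hl⟩

end Triangulation

/-- Every maximal outerplanar graph (the graph of a triangulated simple
polygon on `n ≥ 3` vertices) is properly 3-colorable. -/
theorem polyGraph_three_colorable {n : ℕ} [NeZero n] (P : SimplePolygon n)
    (T : Triangulation P) :
    Nonempty ((polyGraph T).Coloring (Fin 3)) :=
  T.isNoncrossing_polyGraph.colorable_three
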